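/- arXiv:2210.06882 — 2 statements merged into one kernel-verified Lean document; each statement's English description precedes it below -/
import Mathlib

section
/- (Upper bound of Corollary 1.4.) There exists an absolute constant C such that for every integer n ≥ 2, every hypergraph H = (V, (e_i)_{i ∈ I}) whose hyperedges are all nonempty and whose combinatorial size satisfies |V| + |I| ≤ n admits a hypergraph bipartite decomposition with at most C · (log₂ n)² colors; that is, the index set I can be partitioned into at most C · (log₂ n)² classes F_1, …, F_k such that for each class F_m there exists a subset U_m ⊆ V with |U_m ∩ e_i| = 1 for every i ∈ F_m. -/
/-!
Split the hyperedges into dyadic classes by size. If the sizes in a class lie between `D / 2` and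
`D`, a random vertex set that contains each vertex independently with probability `2 / (3 * D)`
meets any given hyperedge of the class in exactly one vertex with probability at least `2 / 9`.
Hence some fixed set does so for at least `2 / 9` of any subfamily of the class, and choosing such
sets greedily exhausts a class in `O(log |I|)` rounds. There are `O(log |V|)` dyadic classes.
-/

/-- A hypergraph given by a vertex set `Vset`, an index set `I` and a hyperedge map `e`
admits a *hypergraph bipartite decomposition* with (at most) `k` colors:
the index set can be partitioned into classes `F_1, …, F_k` (the fibers of `color`)
such that for each class there is a set `U ⊆ Vset` meeting every hyperedge of the
class in exactly one vertex. -/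
def HasHBD {α β : Type} [DecidableEq α] (Vset : Finset α) (I : Finset β)
    (e : β → Finset α) (k : ℕ) : Prop :=
  ∃ color : β → Fin k, ∀ m : Fin k, ∃ U ⊆ Vset,
    ∀ i ∈ I, color i = m → (U ∩ e i).card = 1

section

open Finset

variable {α β : Type*}

/-- The probability that a random subset of `V` containing each element independently with
probability `p` equals `U`. It is meaningful only for `U ⊆ V`, because of the truncated
subtraction. -/
def bernoulliWeight {R : Type*} [CommRing R] (p : R) (V U : Finset α) : R :=
  p ^ #U * (1 - p) ^ (#V - #U)

section CommRing

variable {R : Type*} [CommRing R]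

theorem sum_powerset_bernoulliWeight (p : R) (V : Finset α) :
    ∑ U ∈ V.powerset, bernoulliWeight p V U = 1 := by
  simp only [bernoulliWeight, sum_pow_mul_eq_add_pow, add_sub_cancel, one_pow]

theorem sum_powerset_bernoulliWeight_mul_ite_card_eq (p : R) (e : Finset α) (k : ℕ) :
    ∑ S ∈ e.powerset, bernoulliWeight p e S * (if #S = k then 1 else 0) =
      (#e).choose k * (p ^ k * (1 - p) ^ (#e - k)) := by
  simp only [mul_ite, mul_one, mul_zero, ← sum_filter, ← powersetCard_eq_filter]
  rw [← card_powersetCard, ← nsmul_eq_mul]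
  refine sum_eq_card_nsmul fun S hS => ?_
  rw [bernoulliWeight, (mem_powersetCard.1 hS).2]

variable [DecidableEq α] {V U : Finset α} {a : α}

theorem bernoulliWeight_insert_left (p : R) (hUV : U ⊆ V) (ha : a ∉ V) :
    bernoulliWeight p (insert a V) U = (1 - p) * bernoulliWeight p V U := by
  rw [bernoulliWeight, bernoulliWeight, card_insert_of_notMem ha,
    Nat.sub_add_comm (card_le_card hUV), pow_succ]
  ring

theorem bernoulliWeight_insert_insert (p : R) (hUV : U ⊆ V) (ha : a ∉ V) :
    bernoulliWeight p (insert a V) (insert a U) = p * bernoulliWeight p V U := by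
  rw [bernoulliWeight, bernoulliWeight, card_insert_of_notMem ha,
    card_insert_of_notMem (notMem_mono hUV ha), Nat.add_sub_add_right, pow_succ]
  ring

theorem sum_powerset_bernoulliWeight_mul_inter (p : R) {e : Finset α} (he : e ⊆ V)
    (f : Finset α → R) :
    ∑ U ∈ V.powerset, bernoulliWeight p V U * f (U ∩ e) =
      ∑ S ∈ e.powerset, bernoulliWeight p e S * f S := by
  obtain ⟨W, hW, rfl⟩ : ∃ W, Disjoint e W ∧ e ∪ W = V :=
    ⟨V \ e, disjoint_sdiff, union_sdiff_of_subset he⟩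
  clear he
  induction W using Finset.induction_on with
  | empty =>
    rw [union_empty]
    exact sum_congr rfl fun S hS => by rw [inter_eq_left.2 (mem_powerset.1 hS)]
  | insert a W haW ih =>
    obtain ⟨hae, hW⟩ := disjoint_insert_right.1 hW
    have ha : a ∉ e ∪ W := by simp [hae, haW]
    rw [union_insert, sum_powerset_insert ha, ← sum_add_distrib, ← ih hW]
    refine sum_congr rfl fun U hU => ?_
    rw [mem_powerset] at hU
    rw [bernoulliWeight_insert_left p hU ha, bernoulliWeight_insert_insert p hU ha,
      insert_inter_of_notMem hae]
    ring

end CommRing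

section OrderedRing

variable {𝕜 : Type*} [CommRing 𝕜] [LinearOrder 𝕜] [IsStrictOrderedRing 𝕜]

theorem bernoulliWeight_pos {p : 𝕜} (hp₀ : 0 < p) (hp₁ : p < 1) (V U : Finset α) :
    0 < bernoulliWeight p V U :=
  mul_pos (pow_pos hp₀ _) (pow_pos (sub_pos.2 hp₁) _)

theorem exists_subset_mul_card_le_card_inter_eq_one [DecidableEq α] {V : Finset α}
    {J : Finset β} {e : β → Finset α} (he : ∀ i ∈ J, e i ⊆ V) {p c : 𝕜} (hp₀ : 0 < p)
    (hp₁ : p < 1) (hc : ∀ i ∈ J, c ≤ #(e i) * p * (1 - p) ^ (#(e i) - 1)) :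
    ∃ U ⊆ V, c * #J ≤ #{i ∈ J | #(U ∩ e i) = 1} := by
  have hmean : ∑ U ∈ V.powerset, bernoulliWeight p V U * (c * #J) ≤
      ∑ U ∈ V.powerset, bernoulliWeight p V U * #{i ∈ J | #(U ∩ e i) = 1} :=
    calc
      _ = ∑ _i ∈ J, c := by
        rw [← sum_mul, sum_powerset_bernoulliWeight, one_mul, sum_const, nsmul_eq_mul, mul_comm]
      _ ≤ ∑ i ∈ J, ∑ U ∈ V.powerset,
            bernoulliWeight p V U * (if #(U ∩ e i) = 1 then 1 else 0) := by
        refine sum_le_sum fun i hi => (hc i hi).trans_eq ?_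
        rw [sum_powerset_bernoulliWeight_mul_inter p (he i hi) fun S => if #S = 1 then 1 else 0,
          sum_powerset_bernoulliWeight_mul_ite_card_eq, Nat.choose_one_right, pow_one, mul_assoc]
      _ = _ := by
        rw [sum_comm]
        simp only [← mul_sum, sum_boole]
  obtain ⟨U, hU, hle⟩ := exists_le_of_sum_le (powerset_nonempty V) hmean
  exact ⟨U, mem_powerset.1 hU, le_of_mul_le_mul_left hle (bernoulliWeight_pos hp₀ hp₁ V U)⟩

theorem mul_one_sub_mul_le_mul_one_sub_pow (d : ℕ) {p : 𝕜} (hp₀ : 0 ≤ p) (hp₁ : p ≤ 1) :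
    d * p * (1 - d * p) ≤ d * p * (1 - p) ^ (d - 1) := by
  gcongr
  calc
    1 - d * p ≤ 1 + d * -p := by rw [mul_neg, sub_eq_add_neg]
    _ ≤ (1 + -p) ^ d := one_add_mul_le_pow (by linarith) d
    _ = (1 - p) ^ d := by rw [sub_eq_add_neg]
    _ ≤ (1 - p) ^ (d - 1) :=
      pow_le_pow_of_le_one (sub_nonneg.2 hp₁) (sub_le_self 1 hp₀) (Nat.sub_le d 1)

theorem exists_forall_exists_of_card_filter_not_le {ι : Type*} {P : ι → β → Prop}
    [∀ u, DecidablePred (P u)] {r : 𝕜} (hr : 0 ≤ r) {R : ℕ} {s : Finset β}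
    (h : ∀ t ⊆ s, ∃ u, (#{i ∈ t | ¬P u i} : 𝕜) ≤ r * #t) (hR : r ^ R * #s < 1) :
    ∃ u : Fin R → ι, ∀ i ∈ s, ∃ m, P (u m) i := by
  induction R generalizing s with
  | zero =>
    have hs : #s < 1 := by simpa using hR
    rw [Nat.lt_one_iff, card_eq_zero] at hs
    exact ⟨Fin.elim0, by simp [hs]⟩
  | succ R ih =>
    obtain ⟨u₀, hu₀⟩ := h s Subset.rfl
    have hrest : r ^ R * #{i ∈ s | ¬P u₀ i} < 1 :=
      calc
        _ ≤ r ^ R * (r * #s) := by gcongr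
        _ = r ^ (R + 1) * #s := by rw [pow_succ, mul_assoc]
        _ < 1 := hR
    obtain ⟨u, hu⟩ := ih (fun t ht => h t (ht.trans (filter_subset _ s))) hrest
    refine ⟨Fin.cons u₀ u, fun i hi => Fin.exists_fin_succ.2 ?_⟩
    by_cases hi₀ : P u₀ i
    · exact .inl hi₀
    · exact .inr (hu i (mem_filter.2 ⟨hi, hi₀⟩))

end OrderedRing

variable [DecidableEq α] {V : Finset α} {e : β → Finset α}

theorem exists_subset_card_inter_eq_one_of_card_le_of_le_two_mul_card {J : Finset β} {D : ℕ}
    (hD : 0 < D) (he : ∀ i ∈ J, e i ⊆ V) (hle : ∀ i ∈ J, #(e i) ≤ D)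
    (hge : ∀ i ∈ J, D ≤ 2 * #(e i)) :
    ∃ U ⊆ V, (2 / 9 : ℚ) * #J ≤ #{i ∈ J | #(U ∩ e i) = 1} := by
  have hD₁ : (1 : ℚ) ≤ D := mod_cast hD
  have hp₁ : 2 / (3 * D : ℚ) < 1 := by
    rw [div_lt_one (by positivity)]
    linarith
  refine exists_subset_mul_card_le_card_inter_eq_one he (by positivity) hp₁ fun i hi => ?_
  refine le_trans ?_ (mul_one_sub_mul_le_mul_one_sub_pow _ (by positivity) hp₁.le)
  have hlower : 1 / 3 ≤ #(e i) * (2 / (3 * D : ℚ)) := by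
    have : (D : ℚ) ≤ 2 * #(e i) := mod_cast hge i hi
    field_simp
    linarith
  have hupper : #(e i) * (2 / (3 * D : ℚ)) ≤ 2 / 3 := by
    have : (#(e i) : ℚ) ≤ D := mod_cast hle i hi
    field_simp
    linarith
  -- On `[1/3, 2/3]` the parabola `x * (1 - x)` is smallest at the endpoints.
  nlinarith [mul_nonneg (sub_nonneg.2 hlower) (sub_nonneg.2 hupper)]

theorem exists_family_card_inter_eq_one_of_card_le_of_le_two_mul_card {J : Finset β} {D R : ℕ}
    (hD : 0 < D) (he : ∀ i ∈ J, e i ⊆ V) (hle : ∀ i ∈ J, #(e i) ≤ D)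
    (hge : ∀ i ∈ J, D ≤ 2 * #(e i)) (hR : (7 / 9 : ℚ) ^ R * #J < 1) :
    ∃ U : Fin R → {U : Finset α // U ⊆ V}, ∀ i ∈ J, ∃ m, #((U m : Finset α) ∩ e i) = 1 := by
  refine exists_forall_exists_of_card_filter_not_le
    (P := fun (U : {U : Finset α // U ⊆ V}) i => #((U : Finset α) ∩ e i) = 1)
    (by norm_num) (fun t ht => ?_) hR
  obtain ⟨U, hU, hcard⟩ := exists_subset_card_inter_eq_one_of_card_le_of_le_two_mul_card hD
    (fun i hi => he i (ht hi)) (fun i hi => hle i (ht hi)) (fun i hi => hge i (ht hi))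
  have hsplit : (#{i ∈ t | #(U ∩ e i) = 1} : ℚ) + #{i ∈ t | ¬#(U ∩ e i) = 1} = #t :=
    mod_cast card_filter_add_card_filter_not (s := t) fun i => #(U ∩ e i) = 1
  exact ⟨⟨U, hU⟩, by linarith⟩

theorem exists_family_card_inter_eq_one_of_log_card_eq {J : Finset β} {j R : ℕ}
    (he : ∀ i ∈ J, e i ⊆ V) (hne : ∀ i ∈ J, (e i).Nonempty)
    (hj : ∀ i ∈ J, Nat.log 2 #(e i) = j) (hR : (7 / 9 : ℚ) ^ R * #J < 1) :
    ∃ U : Fin R → {U : Finset α // U ⊆ V}, ∀ i ∈ J, ∃ m, #((U m : Finset α) ∩ e i) = 1 := by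
  refine exists_family_card_inter_eq_one_of_card_le_of_le_two_mul_card
    (D := 2 ^ (j + 1)) (by positivity) he (fun i hi => ?_) (fun i hi => ?_) hR
  · rw [← hj i hi]
    exact (Nat.lt_pow_succ_log_self one_lt_two _).le
  · rw [← hj i hi, pow_succ']
    exact Nat.mul_le_mul_left 2 (Nat.pow_log_le_self 2 (hne i hi).card_ne_zero)

theorem seven_ninths_pow_mul_lt_one (m : ℕ) :
    (7 / 9 : ℚ) ^ (3 * (Nat.log 2 m + 1)) * m < 1 := by
  have hm : (m : ℚ) < 2 ^ (Nat.log 2 m + 1) := mod_cast Nat.lt_pow_succ_log_self one_lt_two m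
  have hcube : (7 / 9 : ℚ) ^ 3 ≤ 1 / 2 := by norm_num
  calc
    (7 / 9 : ℚ) ^ (3 * (Nat.log 2 m + 1)) * m ≤ (1 / 2) ^ (Nat.log 2 m + 1) * m := by
      rw [pow_mul]
      gcongr
    _ < (1 / 2) ^ (Nat.log 2 m + 1) * 2 ^ (Nat.log 2 m + 1) := by gcongr
    _ = 1 := by rw [← mul_pow]; norm_num

end

section

open Finset

variable {α β : Type} [DecidableEq α] {V : Finset α} {I : Finset β} {e : β → Finset α}

theorem HasHBD.of_forall_exists {κ : Type*} [Fintype κ] [Nonempty κ] (U : κ → Finset α)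
    (hU : ∀ c, U c ⊆ V) (h : ∀ i ∈ I, ∃ c, #(U c ∩ e i) = 1) :
    HasHBD V I e (Fintype.card κ) := by
  choose! color hcolor using h
  refine ⟨fun i => Fintype.equivFin κ (color i), fun m =>
    ⟨U ((Fintype.equivFin κ).symm m), hU _, ?_⟩⟩
  rintro i hi rfl
  rw [Equiv.symm_apply_apply]
  exact hcolor i hi

theorem hasHBD_log_card_mul_log_card (he : ∀ i ∈ I, e i ⊆ V) (hne : ∀ i ∈ I, (e i).Nonempty) :
    HasHBD V I e ((Nat.log 2 #V + 1) * (3 * (Nat.log 2 #I + 1))) := by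
  have hclass (j : ℕ) : ∃ U : Fin (3 * (Nat.log 2 #I + 1)) → {U : Finset α // U ⊆ V},
      ∀ i ∈ I.filter (fun i => Nat.log 2 #(e i) = j), ∃ m, #((U m : Finset α) ∩ e i) = 1 := by
    refine exists_family_card_inter_eq_one_of_log_card_eq
      (fun i hi => he i (mem_filter.1 hi).1) (fun i hi => hne i (mem_filter.1 hi).1)
      (fun i hi => (mem_filter.1 hi).2) ?_
    refine lt_of_le_of_lt ?_ (seven_ninths_pow_mul_lt_one #I)
    gcongr
    exact filter_subset _ I
  choose U hU using hclass
  have hcover : ∀ i ∈ I, ∃ c : Fin (Nat.log 2 #V + 1) × Fin (3 * (Nat.log 2 #I + 1)),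
      #((U c.1 c.2 : Finset α) ∩ e i) = 1 := by
    intro i hi
    obtain ⟨m, hm⟩ := hU (Nat.log 2 #(e i)) i (mem_filter.2 ⟨hi, rfl⟩)
    have hlog : Nat.log 2 #(e i) < Nat.log 2 #V + 1 :=
      Nat.lt_succ_of_le (Nat.log_mono_right (card_le_card (he i hi)))
    exact ⟨(⟨_, hlog⟩, m), hm⟩
  simpa only [Fintype.card_prod, Fintype.card_fin] using
    HasHBD.of_forall_exists (fun c : Fin _ × Fin _ => (U c.1 c.2 : Finset α))
      (fun c => (U c.1 c.2).property) hcover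

end

theorem natLog_add_one_le_two_mul_logb {m n : ℕ} (hmn : m ≤ n) (hn : 2 ≤ n) :
    (Nat.log 2 m + 1 : ℝ) ≤ 2 * Real.logb 2 n := by
  have hone : 1 ≤ Nat.log 2 n := Nat.log_pos one_lt_two hn
  have hmono : Nat.log 2 m ≤ Nat.log 2 n := Nat.log_mono_right hmn
  calc
    (Nat.log 2 m + 1 : ℝ) ≤ 2 * Nat.log 2 n := by
      norm_cast
      lia
    _ ≤ 2 * Real.logb 2 n := by
      gcongr
      exact Real.natLog_le_logb n 2

/-- Upper bound of Corollary 1.4: every hypergraph of combinatorial size at most `n`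
admits an HBD with at most `C · (log₂ n)²` colors. -/
theorem hbd_upper_bound :
    ∃ C : ℝ, 0 < C ∧ ∀ n : ℕ, 2 ≤ n →
      ∀ (α β : Type) [DecidableEq α] (Vset : Finset α) (I : Finset β)
        (e : β → Finset α),
        (∀ i ∈ I, e i ⊆ Vset) → (∀ i ∈ I, (e i).Nonempty) →
        Vset.card + I.card ≤ n →
        ∃ k : ℕ, (k : ℝ) ≤ C * (Real.logb 2 n) ^ 2 ∧ HasHBD Vset I e k := by
  refine ⟨12, by norm_num, fun n hn α β _ V I e he hne hcard => ?_⟩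
  refine ⟨_, ?_, hasHBD_log_card_mul_log_card he hne⟩
  have hV := natLog_add_one_le_two_mul_logb (m := V.card) (by omega) hn
  have hI := natLog_add_one_le_two_mul_logb (m := I.card) (by omega) hn
  have hlog : 0 ≤ 2 * Real.logb 2 n := le_trans (by positivity) hV
  push_cast
  calc
    (Nat.log 2 V.card + 1 : ℝ) * (3 * (Nat.log 2 I.card + 1)) ≤
        2 * Real.logb 2 n * (3 * (2 * Real.logb 2 n)) := by gcongr
    _ = 12 * Real.logb 2 n ^ 2 := by ring
end

section
/- (Single-iteration success probability, core inequality from the proof of Lemma 4.1.) For every integer r ≥ 1, setting p = 2^{-⌊log₂ r⌋} (a real number in (0,1]), one has r · p · (1 - p)^{r-1} ≥ 1/9. Equivalently, if X_1, …, X_r are independent Bernoulli random variables each with success probability p = 2^{-⌊log₂ r⌋}, then the probability that exactly one of X_1, …, X_r equals 1 is r · p · (1 - p)^{r-1} ≥ 1/9. -/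
/-!
Write `p` for the success probability. The power `(1 - p) ^ (r - 1)` is controlled by
`1 - 1 / q ≤ log q` at `q = 1 - p`: it is at least `exp (-c)` as soon as
`(r - 1) * p ≤ c * (1 - p)`. For `p = 2 ^ (-⌊log₂ r⌋)` the bounds `1 / r ≤ p ≤ 2 / (r + 1)`,
the second one coming from the integrality of `r < 2 / p`, give `1 ≤ r * p` and allow `c = 2`;
finally `1 / 9 < exp (-2)` because `e < 3`.
-/

open Real

theorem one_div_nine_lt_exp_neg_two : (1 : ℝ) / 9 < exp (-2) := by
  calc (1 : ℝ) / 9 = (3 ^ 2)⁻¹ := by norm_num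
    _ < (exp 1 ^ 2)⁻¹ := by
      gcongr
      exact exp_one_lt_three
    _ = exp (-2) := by rw [← exp_nat_mul, ← exp_neg]; norm_num

theorem exp_neg_le_pow {c q : ℝ} {n : ℕ} (hc : 0 ≤ c) (hq : 0 ≤ q)
    (h : n * (1 - q) ≤ c * q) : exp (-c) ≤ q ^ n := by
  rcases hq.eq_or_lt with rfl | hq
  · obtain rfl : n = 0 := by simpa using h
    simpa using hc
  have hlog : 1 - q⁻¹ ≤ log q := one_sub_inv_le_log_of_pos hq
  rw [← le_log_iff_exp_le (by positivity), log_pow]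
  calc -c ≤ -(n * (1 - q) / q) := by
        rw [neg_le_neg_iff, div_le_iff₀ hq]
        exact h
    _ = n * (1 - q⁻¹) := by field_simp; ring
    _ ≤ n * log q := by gcongr

section LogPow

variable {K : Type*} [Semifield K] [LinearOrder K] [IsStrictOrderedRing K]

theorem one_le_mul_inv_pow_log {b r : ℕ} (hb : 0 < b) (hr : r ≠ 0) :
    1 ≤ (r : K) * (b : K)⁻¹ ^ Nat.log b r := by
  have hpow : (0 : K) < (b : K) ^ Nat.log b r := by positivity
  rw [inv_pow, ← div_eq_mul_inv, one_le_div hpow]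
  exact_mod_cast Nat.pow_log_le_self b hr

theorem add_one_mul_inv_pow_log_le {b : ℕ} (hb : 1 < b) (r : ℕ) :
    ((r : K) + 1) * (b : K)⁻¹ ^ Nat.log b r ≤ b := by
  have hpow : (0 : K) < (b : K) ^ Nat.log b r := by positivity
  rw [inv_pow, ← div_eq_mul_inv, div_le_iff₀ hpow, ← pow_succ']
  exact_mod_cast Nat.lt_pow_succ_log_self hb r

end LogPow

theorem single_iteration_success_general {c p : ℝ} {r : ℕ} (hc : 0 < c) (hrp : 1 ≤ r * p)
    (hp : ((r : ℝ) - 1) * p ≤ c * (1 - p)) :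
    exp (-c) ≤ r * p * (1 - p) ^ (r - 1) := by
  have hr : 1 ≤ r := by
    rw [Nat.one_le_iff_ne_zero]
    rintro rfl
    norm_num at hrp
  have hr' : (1 : ℝ) ≤ r := by exact_mod_cast hr
  have hp0 : 0 < p := pos_of_mul_pos_right (zero_lt_one.trans_le hrp) r.cast_nonneg
  have hq : 0 ≤ 1 - p :=
    nonneg_of_mul_nonneg_right ((mul_nonneg (sub_nonneg.2 hr') hp0.le).trans hp) hc
  calc exp (-c) ≤ (1 - p) ^ (r - 1) := exp_neg_le_pow hc.le hq <| by
        rw [Nat.cast_sub hr, Nat.cast_one, sub_sub_cancel]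
        exact hp
    _ ≤ r * p * (1 - p) ^ (r - 1) := le_mul_of_one_le_left (by positivity) hrp

/-- Single-iteration success probability (core inequality from the proof of Lemma 4.1):
for `p = 2^{-⌊log₂ r⌋}`, the probability `r · p · (1-p)^{r-1}` that exactly one of `r`
independent Bernoulli(`p`) variables equals `1` is at least `1/9`. -/
theorem single_iteration_success (r : ℕ) (hr : 1 ≤ r) :
    (1 : ℝ) / 9 ≤
      (r : ℝ) * ((2 : ℝ)⁻¹ ^ Nat.log 2 r) *
        (1 - (2 : ℝ)⁻¹ ^ Nat.log 2 r) ^ (r - 1) := by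
  have hrp : 1 ≤ (r : ℝ) * 2⁻¹ ^ Nat.log 2 r :=
    mod_cast one_le_mul_inv_pow_log (K := ℝ) two_pos (Nat.one_le_iff_ne_zero.1 hr)
  have hp : ((r : ℝ) + 1) * 2⁻¹ ^ Nat.log 2 r ≤ 2 :=
    mod_cast add_one_mul_inv_pow_log_le (K := ℝ) one_lt_two r
  calc (1 : ℝ) / 9 ≤ exp (-2) := one_div_nine_lt_exp_neg_two.le
    _ ≤ _ := single_iteration_success_general two_pos hrp (by linarith)
end
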